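/- arXiv:2407.04371 — 3 statements merged into one kernel-verified Lean document; each statement's English description precedes it below -/
import Mathlib

section
/- For every n ≥ 1, the number of distinct functions f : {0,1}^n ∖ {0} → {0,1} that can be written in the form f(x) = 1 if ∑_{i,j} w_{ij} x̂_i x̂_j ≥ 0 and f(x) = 0 otherwise, for some w ∈ ℝ^{n×n}, where x̂ = x / ‖x‖₂, is at most 2^{n³ + n² · log₂(e) + 1}. In particular, as a fraction of all 2^{2^n − 1} Boolean functions on {0,1}^n ∖ {0}, the set of functions expressible by a QNN with amplitude encoding tends to 0 as n → ∞. -/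
/-!
A tensor product perceptron is linear in its `n ^ 2` weights, so its value at an input `x` is a
linear functional `φ x` of the weights. If the sets `{x | 0 ≤ φ x w}` shatter a finite set `s`, the
functionals `φ x`, `x ∈ s`, are linearly independent: given a relation `∑ g x • φ x = 0`, choose
weights `w` for which `0 ≤ φ x w` exactly when `0 ≤ g x`; a negative `g x` would make
`∑ g x * φ x w = 0` positive, and replacing `g` by `-g` excludes positive ones. Hence the VC
dimension is at most `n ^ 2`, and by the Sauer–Shelah lemma on the `2 ^ n - 1` nonzero inputs there
are at most `∑ k ≤ n ^ 2, (2 ^ n - 1).choose k ≤ (2 ^ n) ^ n ^ 2 = 2 ^ n ^ 3` functions.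
-/

/-- The number of distinct Boolean functions on `{0,1}^n ∖ {0}` expressible by a tensor
product perceptron acting on amplitude-encoded (i.e. `ℓ²`-normalised) inputs,
classifying `x` as `1` iff `∑_{i,j} w_{ij} x̂_i x̂_j ≥ 0`. -/
noncomputable def exprCount (n : ℕ) : ℕ :=
  Set.ncard {f : {x : Fin n → Bool // x ≠ fun _ => false} → Bool |
    ∃ w : Fin n → Fin n → ℝ,
      ∀ x : {x : Fin n → Bool // x ≠ fun _ => false},
        (f x = true ↔
          0 ≤ ∑ i, ∑ j, w i j *
            ((if x.1 i then (1 : ℝ) else 0) /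
              Real.sqrt (∑ k, (if x.1 k then (1 : ℝ) else 0) ^ 2)) *
            ((if x.1 j then (1 : ℝ) else 0) /
              Real.sqrt (∑ k, (if x.1 k then (1 : ℝ) else 0) ^ 2)))}

open Asymptotics Filter Finset Module

lemma sum_Iic_choose_le_succ_pow (N d : ℕ) : ∑ k ∈ Iic d, N.choose k ≤ (N + 1) ^ d := by
  rw [← Nat.range_succ_eq_Iic]
  induction d with
  | zero => simp
  | succ d ih =>
    calc ∑ k ∈ range (d + 2), N.choose k
        = ∑ k ∈ range (d + 1), N.choose k + N.choose (d + 1) := sum_range_succ _ _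
      _ ≤ (N + 1) ^ d + N ^ (d + 1) := Nat.add_le_add ih (Nat.choose_le_pow N (d + 1))
      _ ≤ (N + 1) ^ d + N * (N + 1) ^ d := by rw [pow_succ']; gcongr; exact N.le_succ
      _ = (N + 1) ^ (d + 1) := by ring

section Threshold

variable {X K W : Type*} [Fintype X]

section OrderedRing

variable [CommRing K] [LinearOrder K] [AddCommGroup W] [Module K W]

open Classical in
/-- The sets `{x | 0 ≤ φ x w}` cut out of a finite input space by a linear threshold unit whose
weights `w` range over the module `W`. The feature map `φ` is encoded as a map into the dual of the
weight space, so that `φ x w` is the value of the unit at the input `x`. -/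
noncomputable def thresholdFamily (φ : X → Dual K W) : Finset (Finset X) :=
  {s | ∃ w, ∀ x, x ∈ s ↔ 0 ≤ φ x w}

lemma mem_thresholdFamily {φ : X → Dual K W} {s : Finset X} :
    s ∈ thresholdFamily φ ↔ ∃ w, ∀ x, x ∈ s ↔ 0 ≤ φ x w := by
  simp only [thresholdFamily, mem_filter_univ]

variable [DecidableEq X]

lemma exists_weights_of_shatters_thresholdFamily {φ : X → Dual K W} {s : Finset X}
    (hs : (thresholdFamily φ).Shatters s) (p : X → Prop) :
    ∃ w, ∀ x ∈ s, p x ↔ 0 ≤ φ x w := by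
  classical
  obtain ⟨u, hu, hsu⟩ := hs (filter_subset p s)
  obtain ⟨w, hw⟩ := mem_thresholdFamily.1 hu
  refine ⟨w, fun x hx => ?_⟩
  have hxu : x ∈ s ∩ u ↔ x ∈ s.filter p := by rw [hsu]
  simpa only [mem_inter, mem_filter, hx, true_and, hw, iff_comm] using hxu

variable [IsStrictOrderedRing K]

lemma nonneg_of_sum_mul_eq_zero_of_shatters_thresholdFamily {φ : X → Dual K W} {s : Finset X}
    (hs : (thresholdFamily φ).Shatters s) {g : X → K} (hg : ∀ w, ∑ x ∈ s, g x * φ x w = 0) :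
    ∀ x ∈ s, 0 ≤ g x := by
  by_contra! ⟨x₀, hx₀, hgx₀⟩
  obtain ⟨w, hw⟩ := exists_weights_of_shatters_thresholdFamily hs (0 ≤ g ·)
  have term_pos_of_neg : ∀ x ∈ s, g x < 0 → 0 < g x * φ x w := fun x hx hgx =>
    mul_pos_of_neg_of_neg hgx (not_le.1 ((hw x hx).not.1 hgx.not_ge))
  have term_nonneg : ∀ x ∈ s, 0 ≤ g x * φ x w := fun x hx =>
    (le_or_gt 0 (g x)).elim (fun hgx => mul_nonneg hgx ((hw x hx).1 hgx))
      fun hgx => (term_pos_of_neg x hx hgx).le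
  have sum_pos : 0 < ∑ x ∈ s, g x * φ x w :=
    sum_pos' term_nonneg ⟨x₀, hx₀, term_pos_of_neg x₀ hx₀ hgx₀⟩
  exact sum_pos.ne' (hg w)

theorem linearIndepOn_of_shatters_thresholdFamily {φ : X → Dual K W} {s : Finset X}
    (hs : (thresholdFamily φ).Shatters s) : LinearIndepOn K φ s := by
  refine linearIndepOn_finset_iff.2 fun g hg x hx => ?_
  have hgw (w : W) : ∑ x ∈ s, g x * φ x w = 0 := by
    simpa using LinearMap.congr_fun hg w
  refine le_antisymm ?_ ?_
  · have hneg (w : W) : ∑ x ∈ s, (-g) x * φ x w = 0 := by simp [hgw]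
    exact neg_nonneg.1 (nonneg_of_sum_mul_eq_zero_of_shatters_thresholdFamily hs hneg x hx)
  · exact nonneg_of_sum_mul_eq_zero_of_shatters_thresholdFamily hs hgw x hx

end OrderedRing

variable [Field K] [LinearOrder K] [IsStrictOrderedRing K] [AddCommGroup W] [Module K W]
  [FiniteDimensional K W]

theorem vcDim_thresholdFamily_le_finrank [DecidableEq X] (φ : X → Dual K W) :
    (thresholdFamily φ).vcDim ≤ finrank K W := by
  refine Finset.sup_le fun s hs => ?_
  have hindep : LinearIndepOn K φ s :=
    linearIndepOn_of_shatters_thresholdFamily (mem_shatterer.1 hs)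
  simpa [Subspace.dual_finrank_eq] using hindep.linearIndependent.fintype_card_le_finrank

theorem card_thresholdFamily_le_sum_choose (φ : X → Dual K W) :
    #(thresholdFamily φ) ≤ ∑ k ∈ Iic (finrank K W), (Fintype.card X).choose k := by
  classical
  calc #(thresholdFamily φ)
      ≤ #(thresholdFamily φ).shatterer := card_le_card_shatterer _
    _ ≤ ∑ k ∈ Iic (thresholdFamily φ).vcDim, (Fintype.card X).choose k :=
      card_shatterer_le_sum_vcDim
    _ ≤ ∑ k ∈ Iic (finrank K W), (Fintype.card X).choose k :=
      sum_le_sum_of_subset (Iic_subset_Iic.2 (vcDim_thresholdFamily_le_finrank φ))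

theorem card_thresholdFamily_le_pow (φ : X → Dual K W) :
    #(thresholdFamily φ) ≤ (Fintype.card X + 1) ^ finrank K W :=
  (card_thresholdFamily_le_sum_choose φ).trans (sum_Iic_choose_le_succ_pow _ _)

end Threshold

section Perceptron

/-- The value `∑ i, ∑ j, w i j * a i * a j` of the tensor product perceptron at the input `a`, as a
linear functional of the weight matrix `w`. -/
def tensorPerceptron {ι K : Type*} [Fintype ι] [CommRing K] (a : ι → K) :
    Dual K (Matrix ι ι K) where
  toFun w := ∑ i, ∑ j, w i j * a i * a j
  map_add' w w' := by simp only [Matrix.add_apply, add_mul, sum_add_distrib]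
  map_smul' c w := by
    simp only [Matrix.smul_apply, smul_eq_mul, mul_assoc, mul_sum, RingHom.id_apply]

/-- The amplitude encoding `x / ‖x‖₂` of a Boolean vector `x`. At the zero vector the convention
`0 / 0 = 0` makes it the zero vector. -/
noncomputable def amplitudeEncoding {ι : Type*} [Fintype ι] (x : ι → Bool) (i : ι) : ℝ :=
  (if x i then 1 else 0) / Real.sqrt (∑ k, (if x k then (1 : ℝ) else 0) ^ 2)

lemma exprCount_eq_card_thresholdFamily (n : ℕ) :
    exprCount n = #(thresholdFamily fun x : {x : Fin n → Bool // x ≠ fun _ => false} =>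
      tensorPerceptron (amplitudeEncoding x.1)) := by
  classical
  rw [← Set.ncard_coe_finset]
  refine Set.ncard_congr (fun f _ => univ.filter (f ·)) ?_ ?_ ?_
  · rintro f ⟨w, hw⟩
    exact mem_thresholdFamily.2 ⟨w, fun x => (mem_filter_univ x).trans (hw x)⟩
  · intro f g _ _ hfg
    simpa [Finset.ext_iff, ← Bool.eq_iff_iff, ← funext_iff] using hfg
  · intro s hs
    obtain ⟨w, hw⟩ := mem_thresholdFamily.1 hs
    exact ⟨fun x => decide (x ∈ s), ⟨w, fun x => decide_eq_true_iff.trans (hw x)⟩, by simp⟩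

lemma card_ne_const_false_add_one (ι : Type*) [Fintype ι] [DecidableEq ι] :
    Fintype.card {x : ι → Bool // x ≠ fun _ => false} + 1 = 2 ^ Fintype.card ι := by
  rw [Fintype.card_subtype_compl, Fintype.card_subtype_eq, Fintype.card_fun, Fintype.card_bool,
    Nat.sub_add_cancel Nat.one_le_two_pow]

theorem exprCount_le_two_pow_pow_three (n : ℕ) : exprCount n ≤ 2 ^ n ^ 3 :=
  calc exprCount n
      ≤ (2 ^ n) ^ (n * n) := by
        simpa only [exprCount_eq_card_thresholdFamily, card_ne_const_false_add_one,
          Fintype.card_fin, finrank_matrix, finrank_self, mul_one] using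
          card_thresholdFamily_le_pow
            fun x : {x : Fin n → Bool // x ≠ fun _ => false} =>
              tensorPerceptron (amplitudeEncoding x.1)
    _ = 2 ^ n ^ 3 := by rw [← pow_mul]; ring

end Perceptron

section Growth

lemma isLittleO_pow_pow_of_isLittleO {α : Type*} {l : Filter α} {p q : α → ℕ} {b : ℝ}
    (hb : 1 < b) (hpq : (fun a => (p a : ℝ)) =o[l] fun a => (q a : ℝ)) (hq : Tendsto q l atTop) :
    (fun a => b ^ p a) =o[l] fun a => b ^ q a := by
  have hsub : Tendsto (fun a => (q a : ℝ) - p a) l atTop :=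
    (IsEquivalent.refl.sub_isLittleO hpq).symm.tendsto_atTop
      (tendsto_natCast_atTop_atTop.comp hq)
  have hexp (m : ℕ) : b ^ m = Real.exp (m * Real.log b) := by
    rw [Real.exp_nat_mul, Real.exp_log (zero_lt_one.trans hb)]
  simp only [hexp, Real.isLittleO_exp_comp_exp_comp, ← sub_mul]
  exact hsub.atTop_mul_const (Real.log_pos hb)

theorem exprCount_isLittleO :
    (fun n => (exprCount n : ℝ)) =o[atTop] fun n => (2 : ℝ) ^ (2 ^ n - 1) := by
  have hcube : (fun n : ℕ => ((n ^ 3 : ℕ) : ℝ)) =o[atTop] fun n => ((2 ^ n : ℕ) : ℝ) := by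
    simpa using isLittleO_pow_const_const_pow_of_one_lt (R := ℝ) 3 one_lt_two
  have hpow : (fun n : ℕ => (2 : ℝ) ^ n ^ 3) =o[atTop] fun n => (2 : ℝ) ^ 2 ^ n :=
    isLittleO_pow_pow_of_isLittleO one_lt_two hcube
      (tendsto_pow_atTop_atTop_of_one_lt one_lt_two)
  have hle : (fun n => (exprCount n : ℝ)) =O[atTop] fun n => (2 : ℝ) ^ n ^ 3 :=
    .of_bound' <| .of_forall fun n => by
      simpa using mod_cast exprCount_le_two_pow_pow_three n
  have hhalf (n : ℕ) : (2 : ℝ) ^ 2 ^ n = 2 * 2 ^ (2 ^ n - 1) :=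
    (mul_pow_sub_one (pow_ne_zero n two_ne_zero) 2).symm
  simp only [hhalf] at hpow
  exact (hle.trans_isLittleO hpow).trans_isBigO (isBigO_const_mul_self _ _ _)

end Growth

/-- For every `n ≥ 1`, the number of Boolean functions on `{0,1}^n ∖ {0}`
expressible by a QNN with amplitude encoding (equivalently, by a tensor product perceptron
on normalised inputs) is at most `2^{n³ + n²·log₂(e) + 1}`; as a fraction of all
`2^{2^n − 1}` Boolean functions, it tends to `0` as `n → ∞`. -/
theorem stmt11 :
    (∀ n : ℕ, 1 ≤ n →
      (exprCount n : ℝ)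
        ≤ (2 : ℝ) ^ ((n : ℝ) ^ 3 + (n : ℝ) ^ 2 * Real.logb 2 (Real.exp 1) + 1))
    ∧ Filter.Tendsto (fun n : ℕ => (exprCount n : ℝ) / 2 ^ (2 ^ n - 1 : ℕ))
        Filter.atTop (nhds 0) := by
  refine ⟨fun n _ => ?_, exprCount_isLittleO.tendsto_div_nhds_zero⟩
  have hlog : 0 ≤ Real.logb 2 (Real.exp 1) :=
    Real.logb_nonneg one_lt_two (Real.one_le_exp zero_le_one)
  calc (exprCount n : ℝ)
      ≤ (2 : ℝ) ^ n ^ 3 := mod_cast exprCount_le_two_pow_pow_three n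
    _ = (2 : ℝ) ^ ((n : ℝ) ^ 3) := by rw [← Nat.cast_pow, Real.rpow_natCast]
    _ ≤ (2 : ℝ) ^ ((n : ℝ) ^ 3 + (n : ℝ) ^ 2 * Real.logb 2 (Real.exp 1) + 1) := by
      gcongr
      · exact one_le_two
      · rw [add_assoc]
        exact le_add_of_nonneg_right (by positivity)
end

section
/- Let N ≥ 1 and let W⁰ = diag(w⁰₁, …, w⁰_N) and W¹ = diag(w¹₁, …, w¹_N) be real diagonal matrices with all entries in [−1, 1]. Define the 4N×4N matrices U₀ = (1/√2) [[√(I+W⁰), −√(I−W⁰), 0, 0], [√(I−W⁰), √(I+W⁰), 0, 0], [0, 0, √(I+W⁰), −√(I−W⁰)], [0, 0, √(I−W⁰), √(I+W⁰)]] and U₁ = (1/√2) [[√(I+W¹), 0, −√(I−W¹), 0], [0, √(I+W¹), 0, −√(I−W¹)], [√(I−W¹), 0, √(I+W¹), 0], [0, √(I−W¹), 0, √(I+W¹)]] (entrywise square roots on the diagonal, blocks of size N×N), and let Z₀ = I₂ ⊗ σ_Z ⊗ I_N and Z₁ = σ_Z ⊗ I₂ ⊗ I_N. Then for every x ∈ ℝ^N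 with x_j ≥ 0 and ∑_j x_j = 1, setting v = (√x₁, …, √x_N, 0, …, 0) ∈ ℂ^{4N}, one has v† (U₁U₀)† Z₀ (U₁U₀) v = ∑_j w⁰_j x_j and v† (U₁U₀)† Z₁ (U₁U₀) v = ∑_j w¹_j x_j. That is, two perceptrons can be simultaneously encoded on two readout qubits. -/
open Matrix

/-!
Write `w j = cos 2θ j`. Then `U₀ = I₂ ⊗ R(w⁰)`, where `R(w)` turns the `j`-th plane by `θ j`, and
`U₁` is the same rotation for `w¹`, acting on the other qubit. In the Heisenberg picture a rotation
conjugates `σ_Z ⊗ I` into a matrix whose upper left block is `diag (cos 2θ) = diag w`. The rotations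
commute with one another and each commutes with the other's readout operator, so in the expectation
of `Z₀` the unitary `U₁` cancels, and in that of `Z₁` the unitary `U₀` cancels.
-/

section Conjugation

variable {R : Type*} [Monoid R] [StarMul R] {u v z : R}

theorem star_mul_mul_mul_of_commute (hu : u ∈ unitary R) (huz : Commute u z) :
    star (u * v) * z * (u * v) = star v * z * v := by
  calc star (u * v) * z * (u * v) = star v * star u * (z * u) * v := by
        simp only [star_mul, mul_assoc]
    _ = star v * (star u * u) * z * v := by simp only [← huz.eq, mul_assoc]
    _ = star v * z * v := by rw [Unitary.star_mul_self_of_mem hu, mul_one]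

theorem star_mul_mul_mul_of_commute_of_commute (hv : v ∈ unitary R) (huv : Commute u v)
    (hvz : Commute v z) : star (u * v) * z * (u * v) = star u * z * u := by
  rw [huv.eq, star_mul_mul_mul_of_commute hv hvz]

end Conjugation

section Blocks

variable {m n α : Type*}

/-- The block matrix of `I₂ ⊗ M`: the operator `M` next to an idle qubit, whose two basis states
index the summands of `n ⊕ n`. -/
def idTensor [Zero α] (M : Matrix n n α) : Matrix (n ⊕ n) (n ⊕ n) α :=
  fromBlocks M 0 0 M

/-- The observable `σ_Z ⊗ I` reading out the qubit whose two basis states index the summands of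
`n ⊕ n`. -/
def pauliZ (n α : Type*) [DecidableEq n] [Zero α] [One α] [Neg α] : Matrix (n ⊕ n) (n ⊕ n) α :=
  fromBlocks 1 0 0 (-1)

theorem idTensor_smul {S : Type*} [Monoid S] [AddMonoid α] [DistribMulAction S α] (c : S)
    (M : Matrix n n α) : idTensor (c • M) = c • idTensor M := by
  rw [idTensor, idTensor, fromBlocks_smul, smul_zero]

theorem idTensor_neg [AddGroup α] (M : Matrix n n α) : idTensor (-M) = -idTensor M := by
  rw [idTensor, idTensor, fromBlocks_neg, neg_zero]

theorem commute_fromBlocks_idTensor [Fintype n] [NonUnitalNonAssocSemiring α]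
    {A B C D M : Matrix n n α} (hA : Commute A M) (hB : Commute B M) (hC : Commute C M)
    (hD : Commute D M) : Commute (fromBlocks A B C D) (idTensor M) := by
  simp [commute_iff_eq, idTensor, fromBlocks_multiply, hA.eq, hB.eq, hC.eq, hD.eq]

theorem commute_pauliZ_idTensor [Fintype n] [DecidableEq n] [Ring α] (M : Matrix n n α) :
    Commute (pauliZ n α) (idTensor M) :=
  commute_fromBlocks_idTensor (.one_left M) (.zero_left M) (.zero_left M) (.neg_one_left M)

theorem idTensor_mem_unitaryGroup [Fintype n] [DecidableEq n] [CommRing α] [StarRing α]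
    {M : Matrix n n α} (hM : M ∈ unitaryGroup n α) : idTensor M ∈ unitaryGroup (n ⊕ n) α := by
  rw [mem_unitaryGroup_iff, star_eq_conjTranspose] at hM ⊢
  simp only [idTensor, fromBlocks_conjTranspose, conjTranspose_zero, fromBlocks_multiply, hM,
    mul_zero, zero_mul, add_zero, zero_add, fromBlocks_one]

theorem conjTranspose_idTensor_mul_mul [Fintype n] [NonUnitalSemiring α] [StarRing α]
    (M Z : Matrix n n α) :
    (idTensor M)ᴴ * idTensor Z * idTensor M = idTensor (Mᴴ * Z * M) := by
  simp [idTensor, fromBlocks_conjTranspose, fromBlocks_multiply]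

theorem conjTranspose_fromBlocks_neg_mul_self [Fintype n] [Ring α] [StarRing α] {A B : Matrix n n α}
    (hA : A.IsHermitian) (hB : B.IsHermitian) (hAB : Commute A B) :
    (fromBlocks A (-B) B A)ᴴ * fromBlocks A (-B) B A = idTensor (A * A + B * B) := by
  simp [idTensor, fromBlocks_conjTranspose, fromBlocks_multiply, hA.eq, hB.eq, hAB.eq, add_comm]

theorem conjTranspose_fromBlocks_neg_mul_pauliZ_mul [Fintype n] [DecidableEq n] [Ring α]
    [StarRing α] {A B : Matrix n n α} (hA : A.IsHermitian) (hB : B.IsHermitian) :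
    (fromBlocks A (-B) B A)ᴴ * pauliZ n α * fromBlocks A (-B) B A =
      fromBlocks (A * A - B * B) (-(A * B + B * A)) (-(A * B + B * A)) (B * B - A * A) := by
  simp [pauliZ, fromBlocks_conjTranspose, fromBlocks_multiply, hA.eq, hB.eq, sub_eq_add_neg,
    add_comm]

theorem star_sumElim_zero_dotProduct_mulVec [Fintype m] [Fintype n] [NonUnitalSemiring α]
    [StarRing α] (M : Matrix (m ⊕ n) (m ⊕ n) α) (ψ : m → α) :
    star (Sum.elim ψ 0) ⬝ᵥ (M *ᵥ Sum.elim ψ 0) = star ψ ⬝ᵥ (M.toBlocks₁₁ *ᵥ ψ) := by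
  rw [← fromBlocks_toBlocks M]
  simp [fromBlocks_mulVec, dotProduct, Fintype.sum_sum_type]

theorem star_dotProduct_diagonal_ofReal_mulVec [Fintype n] [DecidableEq n] (w : n → ℝ)
    (ψ : n → ℂ) :
    star ψ ⬝ᵥ (diagonal (fun j ↦ (w j : ℂ)) *ᵥ ψ) = ((∑ j, w j * ‖ψ j‖ ^ 2 : ℝ) : ℂ) := by
  simp only [dotProduct, mulVec_diagonal, Pi.star_apply, Complex.ofReal_sum]
  refine Finset.sum_congr rfl fun j _ ↦ ?_
  rw [mul_left_comm, RCLike.star_def, Complex.conj_mul']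
  push_cast
  rfl

end Blocks

section WeightRotation

variable {ι : Type*} [DecidableEq ι]

/-- The diagonal matrix `√(diag d)` with entrywise square roots, where `√` is zero on negative
reals. -/
noncomputable def sqrtDiagonal (d : ι → ℝ) : Matrix ι ι ℂ :=
  diagonal fun j ↦ (√(d j) : ℂ)

/-- The rotation `(1/√2) [[√(I+W), -√(I-W)], [√(I-W), √(I+W)]]` with `W = diag w`, which encodes the
weights `w` in the qubit whose two basis states index the summands of `ι ⊕ ι`. -/
noncomputable def weightRotation (w : ι → ℝ) : Matrix (ι ⊕ ι) (ι ⊕ ι) ℂ :=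
  ((√2)⁻¹ : ℂ) • fromBlocks (sqrtDiagonal (1 + w)) (-sqrtDiagonal (1 - w))
    (sqrtDiagonal (1 - w)) (sqrtDiagonal (1 + w))

theorem isHermitian_sqrtDiagonal (d : ι → ℝ) : (sqrtDiagonal d).IsHermitian :=
  isHermitian_diagonal_iff.mpr fun _ ↦ Complex.conj_ofReal _

theorem sqrtDiagonal_sumElim_self (d : ι → ℝ) :
    sqrtDiagonal (Sum.elim d d) = idTensor (sqrtDiagonal d) := by
  rw [idTensor, sqrtDiagonal, sqrtDiagonal, fromBlocks_diagonal]
  congr 1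
  ext (j | j) <;> rfl

theorem weightRotation_sumElim_self (w : ι → ℝ) :
    weightRotation (Sum.elim w w) = ((√2)⁻¹ : ℂ) •
      fromBlocks (idTensor (sqrtDiagonal (1 + w))) (idTensor (-sqrtDiagonal (1 - w)))
        (idTensor (sqrtDiagonal (1 - w))) (idTensor (sqrtDiagonal (1 + w))) := by
  have hadd : 1 + Sum.elim w w = Sum.elim (1 + w) (1 + w) := by ext (j | j) <;> rfl
  have hsub : 1 - Sum.elim w w = Sum.elim (1 - w) (1 - w) := by ext (j | j) <;> rfl
  rw [weightRotation, hadd, hsub, sqrtDiagonal_sumElim_self, sqrtDiagonal_sumElim_self,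
    idTensor_neg]

variable [Fintype ι]

theorem commute_sqrtDiagonal (d e : ι → ℝ) : Commute (sqrtDiagonal d) (sqrtDiagonal e) :=
  commute_diagonal _ _

theorem sqrtDiagonal_mul_self {d : ι → ℝ} (hd : 0 ≤ d) :
    sqrtDiagonal d * sqrtDiagonal d = diagonal fun j ↦ (d j : ℂ) := by
  simp only [sqrtDiagonal, diagonal_mul_diagonal, ← Complex.ofReal_mul, Real.mul_self_sqrt (hd _)]

theorem commute_weightRotation_idTensor {w : ι → ℝ} {M : Matrix ι ι ℂ}
    (hM : ∀ d : ι → ℝ, Commute (sqrtDiagonal d) M) : Commute (weightRotation w) (idTensor M) :=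
  (commute_fromBlocks_idTensor (hM _) (hM _).neg_left (hM _) (hM _)).smul_left _

theorem commute_weightRotation_sumElim_self_idTensor {w : ι → ℝ} {M : Matrix (ι ⊕ ι) (ι ⊕ ι) ℂ}
    (hM : ∀ d : ι → ℝ, Commute (idTensor (sqrtDiagonal d)) M) :
    Commute (weightRotation (Sum.elim w w)) (idTensor M) := by
  rw [weightRotation_sumElim_self, idTensor_neg]
  exact (commute_fromBlocks_idTensor (hM _) (hM _).neg_left (hM _) (hM _)).smul_left _

theorem star_sqrt_two_inv_mul_self : star (√2 : ℂ)⁻¹ * (√2 : ℂ)⁻¹ = 2⁻¹ := by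
  rw [← Complex.ofReal_inv, RCLike.star_def, Complex.conj_ofReal, ← Complex.ofReal_mul,
    ← mul_inv, Real.mul_self_sqrt zero_le_two]
  norm_num

theorem sqrtDiagonal_mul_self_add_mul_self {w : ι → ℝ} (hw : w ∈ Set.Icc (-1) 1) :
    sqrtDiagonal (1 + w) * sqrtDiagonal (1 + w) + sqrtDiagonal (1 - w) * sqrtDiagonal (1 - w) =
      (2 : ℂ) • 1 := by
  rw [sqrtDiagonal_mul_self (neg_le_iff_add_nonneg'.mp hw.1),
    sqrtDiagonal_mul_self (sub_nonneg.mpr hw.2), diagonal_add, smul_one_eq_diagonal]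
  congr 1
  ext j
  push_cast [Pi.add_apply, Pi.sub_apply, Pi.one_apply]
  ring

theorem sqrtDiagonal_mul_self_sub_mul_self {w : ι → ℝ} (hw : w ∈ Set.Icc (-1) 1) :
    sqrtDiagonal (1 + w) * sqrtDiagonal (1 + w) - sqrtDiagonal (1 - w) * sqrtDiagonal (1 - w) =
      (2 : ℂ) • diagonal fun j ↦ (w j : ℂ) := by
  rw [sqrtDiagonal_mul_self (neg_le_iff_add_nonneg'.mp hw.1),
    sqrtDiagonal_mul_self (sub_nonneg.mpr hw.2), diagonal_sub, ← diagonal_smul]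
  congr 1
  ext j
  push_cast [Pi.add_apply, Pi.sub_apply, Pi.one_apply, Pi.smul_apply, smul_eq_mul]
  ring

theorem weightRotation_mem_unitaryGroup {w : ι → ℝ} (hw : w ∈ Set.Icc (-1) 1) :
    weightRotation w ∈ unitaryGroup (ι ⊕ ι) ℂ := by
  rw [mem_unitaryGroup_iff', star_eq_conjTranspose, weightRotation, conjTranspose_smul,
    smul_mul_smul_comm, conjTranspose_fromBlocks_neg_mul_self (isHermitian_sqrtDiagonal _)
      (isHermitian_sqrtDiagonal _) (commute_sqrtDiagonal _ _),
    star_sqrt_two_inv_mul_self, sqrtDiagonal_mul_self_add_mul_self hw, idTensor_smul,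
    inv_smul_smul₀ two_ne_zero, idTensor, fromBlocks_one]

theorem toBlocks₁₁_conjTranspose_weightRotation_mul_pauliZ_mul {w : ι → ℝ}
    (hw : w ∈ Set.Icc (-1) 1) :
    ((weightRotation w)ᴴ * pauliZ ι ℂ * weightRotation w).toBlocks₁₁ =
      diagonal fun j ↦ (w j : ℂ) := by
  rw [weightRotation, conjTranspose_smul, smul_mul_assoc, smul_mul_smul_comm,
    conjTranspose_fromBlocks_neg_mul_pauliZ_mul (isHermitian_sqrtDiagonal _)
      (isHermitian_sqrtDiagonal _),
    star_sqrt_two_inv_mul_self, sqrtDiagonal_mul_self_sub_mul_self hw, fromBlocks_smul,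
    inv_smul_smul₀ two_ne_zero, toBlocks_fromBlocks₁₁]

theorem star_dotProduct_conjTranspose_weightRotation_mul_pauliZ_mul_mulVec {w : ι → ℝ}
    (hw : w ∈ Set.Icc (-1) 1) (ψ : ι → ℂ) :
    star (Sum.elim ψ 0) ⬝ᵥ
        (((weightRotation w)ᴴ * pauliZ ι ℂ * weightRotation w) *ᵥ Sum.elim ψ 0) =
      ((∑ j, w j * ‖ψ j‖ ^ 2 : ℝ) : ℂ) := by
  rw [star_sumElim_zero_dotProduct_mulVec,
    toBlocks₁₁_conjTranspose_weightRotation_mul_pauliZ_mul hw,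
    star_dotProduct_diagonal_ofReal_mulVec]

end WeightRotation

theorem stmt13_general {ι : Type*} [Fintype ι] [DecidableEq ι] {w0 w1 : ι → ℝ}
    (hw0 : w0 ∈ Set.Icc (-1) 1) (hw1 : w1 ∈ Set.Icc (-1) 1) (ψ : ι → ℂ) :
    let U := weightRotation (Sum.elim w1 w1) * idTensor (weightRotation w0)
    let v : (ι ⊕ ι) ⊕ (ι ⊕ ι) → ℂ := Sum.elim (Sum.elim ψ 0) 0
    star v ⬝ᵥ ((Uᴴ * idTensor (pauliZ ι ℂ) * U) *ᵥ v) = ((∑ j, w0 j * ‖ψ j‖ ^ 2 : ℝ) : ℂ) ∧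
      star v ⬝ᵥ ((Uᴴ * pauliZ (ι ⊕ ι) ℂ * U) *ᵥ v) = ((∑ j, w1 j * ‖ψ j‖ ^ 2 : ℝ) : ℂ) := by
  intro U v
  have hw11 : Sum.elim w1 w1 ∈ Set.Icc (-1) 1 :=
    ⟨Sum.forall.mpr ⟨hw1.1, hw1.1⟩, Sum.forall.mpr ⟨hw1.2, hw1.2⟩⟩
  have hZ0 : Uᴴ * idTensor (pauliZ ι ℂ) * U =
      idTensor ((weightRotation w0)ᴴ * pauliZ ι ℂ * weightRotation w0) :=
    (star_mul_mul_mul_of_commute (weightRotation_mem_unitaryGroup hw11)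
      (commute_weightRotation_sumElim_self_idTensor fun _ ↦
        (commute_pauliZ_idTensor _).symm)).trans (conjTranspose_idTensor_mul_mul _ _)
  have hZ1 : Uᴴ * pauliZ (ι ⊕ ι) ℂ * U =
      (weightRotation (Sum.elim w1 w1))ᴴ * pauliZ (ι ⊕ ι) ℂ * weightRotation (Sum.elim w1 w1) :=
    star_mul_mul_mul_of_commute_of_commute
      (idTensor_mem_unitaryGroup (weightRotation_mem_unitaryGroup hw0))
      (commute_weightRotation_sumElim_self_idTensor fun _ ↦
        (commute_weightRotation_idTensor fun _ ↦ commute_sqrtDiagonal _ _).symm)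
      (commute_pauliZ_idTensor _).symm
  constructor
  · rw [hZ0, star_sumElim_zero_dotProduct_mulVec, idTensor, toBlocks_fromBlocks₁₁,
      star_dotProduct_conjTranspose_weightRotation_mul_pauliZ_mul_mulVec hw0]
  · rw [hZ1, star_dotProduct_conjTranspose_weightRotation_mul_pauliZ_mul_mulVec hw11]
    simp [Fintype.sum_sum_type]

/-- Two perceptrons with weights `w⁰, w¹ ∈ [-1,1]^N` can be simultaneously
encoded on two readout qubits.  With the explicit `4N×4N` unitaries `U₀`, `U₁` built from
`W⁰ = diag(w⁰)` and `W¹ = diag(w¹)` (entrywise square roots on the diagonal), and the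
readout operators `Z₀ = I₂ ⊗ σ_Z ⊗ I_N`, `Z₁ = σ_Z ⊗ I₂ ⊗ I_N`, for every probability
vector `x` and `v = (√x₁, …, √x_N, 0, …, 0)` one has
`v† (U₁U₀)† Z₀ (U₁U₀) v = ∑ⱼ w⁰ⱼ xⱼ` and `v† (U₁U₀)† Z₁ (U₁U₀) v = ∑ⱼ w¹ⱼ xⱼ`. -/
theorem stmt13 (N : ℕ) (hN : 1 ≤ N) (w0 w1 : Fin N → ℝ)
    (hw0 : ∀ j, w0 j ∈ Set.Icc (-1 : ℝ) 1) (hw1 : ∀ j, w1 j ∈ Set.Icc (-1 : ℝ) 1) :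
    let A0 : Matrix (Fin N) (Fin N) ℂ :=
      Matrix.diagonal fun j => (Real.sqrt (1 + w0 j) : ℂ)
    let B0 : Matrix (Fin N) (Fin N) ℂ :=
      Matrix.diagonal fun j => (Real.sqrt (1 - w0 j) : ℂ)
    let A1 : Matrix (Fin N) (Fin N) ℂ :=
      Matrix.diagonal fun j => (Real.sqrt (1 + w1 j) : ℂ)
    let B1 : Matrix (Fin N) (Fin N) ℂ :=
      Matrix.diagonal fun j => (Real.sqrt (1 - w1 j) : ℂ)
    let U0 : Matrix ((Fin N ⊕ Fin N) ⊕ (Fin N ⊕ Fin N))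
        ((Fin N ⊕ Fin N) ⊕ (Fin N ⊕ Fin N)) ℂ :=
      ((Real.sqrt 2)⁻¹ : ℂ) •
        Matrix.fromBlocks (Matrix.fromBlocks A0 (-B0) B0 A0) 0 0
          (Matrix.fromBlocks A0 (-B0) B0 A0)
    let U1 : Matrix ((Fin N ⊕ Fin N) ⊕ (Fin N ⊕ Fin N))
        ((Fin N ⊕ Fin N) ⊕ (Fin N ⊕ Fin N)) ℂ :=
      ((Real.sqrt 2)⁻¹ : ℂ) •
        Matrix.fromBlocks (Matrix.fromBlocks A1 0 0 A1)
          (Matrix.fromBlocks (-B1) 0 0 (-B1))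
          (Matrix.fromBlocks B1 0 0 B1)
          (Matrix.fromBlocks A1 0 0 A1)
    let Z0 : Matrix ((Fin N ⊕ Fin N) ⊕ (Fin N ⊕ Fin N))
        ((Fin N ⊕ Fin N) ⊕ (Fin N ⊕ Fin N)) ℂ :=
      Matrix.fromBlocks (Matrix.fromBlocks 1 0 0 (-1)) 0 0
        (Matrix.fromBlocks 1 0 0 (-1))
    let Z1 : Matrix ((Fin N ⊕ Fin N) ⊕ (Fin N ⊕ Fin N))
        ((Fin N ⊕ Fin N) ⊕ (Fin N ⊕ Fin N)) ℂ :=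
      Matrix.fromBlocks 1 0 0 (-1)
    ∀ x : Fin N → ℝ, (∀ j, 0 ≤ x j) → (∑ j, x j) = 1 →
      let v : ((Fin N ⊕ Fin N) ⊕ (Fin N ⊕ Fin N)) → ℂ :=
        Sum.elim (Sum.elim (fun j => (Real.sqrt (x j) : ℂ)) 0) 0
      star v ⬝ᵥ (((U1 * U0)ᴴ * Z0 * (U1 * U0)) *ᵥ v)
          = ((∑ j, w0 j * x j : ℝ) : ℂ) ∧
      star v ⬝ᵥ (((U1 * U0)ᴴ * Z1 * (U1 * U0)) *ᵥ v)
          = ((∑ j, w1 j * x j : ℝ) : ℂ) := by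
  intro _ _ _ _ _ _ _ _ x hx _ _
  have h := stmt13_general ⟨fun j ↦ (hw0 j).1, fun j ↦ (hw0 j).2⟩
    ⟨fun j ↦ (hw1 j).1, fun j ↦ (hw1 j).2⟩ fun j ↦ (√(x j) : ℂ)
  rw [weightRotation_sumElim_self, weightRotation, idTensor_smul] at h
  simp only [Complex.norm_real, Real.norm_eq_abs, sq_abs, Real.sq_sqrt (hx _)] at h
  exact h
end

section
/- Let N ≥ 1 and let x⁽¹⁾, …, x⁽ᵐ⁾ ∈ ℂ^N be any finite sequence of vectors. Then the m×m real matrix G with entries G_{ab} = |∑_i x⁽ᵃ⁾_i conj(x⁽ᵇ⁾_i)|² has rank at most N². That is, the Gram matrix of the QNN kernel K(x, y) = |⟨x, y⟩|² on an N-dimensional Hilbert space has rank at most N². -/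
open Matrix

/-!
The rank-one matrix `ρ x = x xᴴ` is Hermitian and `|⟨x, y⟩|² = tr (ρ x * ρ y)`, so the kernel is the
Frobenius inner product of feature vectors in the real vector space of Hermitian `N × N` matrices,
which has dimension `N²`. The entries `re (H i j) + im (H i j)` are orthonormal coordinates on that
space: the real part of a Hermitian matrix is symmetric and its imaginary part antisymmetric, so the
mixed terms in the inner product cancel.
-/

open scoped InnerProductSpace

theorem rank_of_dotProduct_le {R ι ι' κ : Type*} [CommSemiring R] [StrongRankCondition R]
    [Fintype ι'] [Fintype κ] (u : ι → κ → R) (v : ι' → κ → R) :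
    (of fun a b => u a ⬝ᵥ v b).rank ≤ Fintype.card κ :=
  (rank_mul_le_left (of u) (of v)ᵀ).trans (rank_le_card_width (of u))

theorem trace_mul_eq_zero_of_isSymm_of_transpose_eq_neg {n R : Type*} [Fintype n] [CommRing R]
    [IsAddTorsionFree R] {A B : Matrix n n R} (hA : A.IsSymm) (hB : Bᵀ = -B) :
    trace (A * B) = 0 := by
  refine self_eq_neg.mp ?_
  calc trace (A * B) = trace (Aᵀ * Bᵀ) := by rw [← trace_transpose, transpose_mul, trace_mul_comm]
    _ = -trace (A * B) := by rw [hA.eq, hB, mul_neg, trace_neg]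

theorem isHermitian_vecMulVec_star {n R : Type*} [Mul R] [StarMul R] (x : n → R) :
    (vecMulVec x (star x)).IsHermitian := by
  rw [IsHermitian, conjTranspose_vecMulVec, star_star]

section RCLike

variable {n 𝕜 : Type*} [RCLike 𝕜]

theorem isSymm_map_re {H : Matrix n n 𝕜} (hH : H.IsHermitian) : (H.map RCLike.re).IsSymm := by
  ext i j
  simp [← hH.apply i j]

theorem transpose_map_im {H : Matrix n n 𝕜} (hH : H.IsHermitian) :
    (H.map RCLike.im)ᵀ = -H.map RCLike.im := by
  ext i j
  simp [← hH.apply i j]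

/-- The real coordinate matrix of `H`, with entries `re (H i j) + im (H i j)`; restricted to
Hermitian matrices, this map preserves the Frobenius inner product. -/
def reAddIm (H : Matrix n n 𝕜) : Matrix n n ℝ :=
  H.map RCLike.re + H.map RCLike.im

variable [Fintype n]

theorem re_trace_mul (H K : Matrix n n 𝕜) :
    RCLike.re (trace (H * K)) =
      trace (H.map RCLike.re * K.map RCLike.re) - trace (H.map RCLike.im * K.map RCLike.im) := by
  simp [trace, mul_apply]

theorem vec_reAddIm_dotProduct_vec_reAddIm {H K : Matrix n n 𝕜}
    (hH : H.IsHermitian) (hK : K.IsHermitian) :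
    vec (reAddIm H) ⬝ᵥ vec (reAddIm K) = RCLike.re (trace (H * K)) := by
  have re_im : trace (H.map RCLike.re * K.map RCLike.im) = 0 :=
    trace_mul_eq_zero_of_isSymm_of_transpose_eq_neg (isSymm_map_re hH) (transpose_map_im hK)
  have im_re : trace (H.map RCLike.im * K.map RCLike.re) = 0 := by
    rw [trace_mul_comm]
    exact trace_mul_eq_zero_of_isSymm_of_transpose_eq_neg (isSymm_map_re hK) (transpose_map_im hH)
  rw [vec_dotProduct_vec, reAddIm, reAddIm, transpose_add, (isSymm_map_re hH).eq,
    transpose_map_im hH, re_trace_mul]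
  simp only [add_mul, mul_add, neg_mul, trace_add, trace_neg, re_im, im_re]
  ring

theorem trace_vecMulVec_star_mul_vecMulVec_star (x y : n → 𝕜) :
    trace (vecMulVec x (star x) * vecMulVec y (star y)) = (‖y ⬝ᵥ star x‖ : 𝕜) ^ 2 := by
  rw [vecMulVec_mul_vecMulVec, trace_vecMulVec, dotProduct_smul, smul_eq_mul, ← RCLike.mul_conj,
    dotProduct_comm (star x), starRingEnd_apply, ← dotProduct_star]

/-- The feature vector of `x` for the QNN kernel: the real coordinates of the unnormalised pure
state `x xᴴ`, flattened to a vector. -/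
def qnnFeature (x : n → 𝕜) : n × n → ℝ :=
  vec (reAddIm (vecMulVec x (star x)))

theorem qnnFeature_dotProduct_qnnFeature (x y : EuclideanSpace 𝕜 n) :
    qnnFeature x.ofLp ⬝ᵥ qnnFeature y.ofLp = ‖⟪x, y⟫_𝕜‖ ^ 2 := by
  rw [qnnFeature, qnnFeature, vec_reAddIm_dotProduct_vec_reAddIm (isHermitian_vecMulVec_star _)
    (isHermitian_vecMulVec_star _), trace_vecMulVec_star_mul_vecMulVec_star,
    EuclideanSpace.inner_eq_star_dotProduct]
  norm_cast

end RCLike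

theorem stmt16_general {𝕜 E ι ι' : Type*} [RCLike 𝕜] [NormedAddCommGroup E]
    [InnerProductSpace 𝕜 E] [FiniteDimensional 𝕜 E] [Fintype ι'] (x : ι → E) (y : ι' → E) :
    (of fun a b => ‖⟪x a, y b⟫_𝕜‖ ^ 2).rank ≤ Module.finrank 𝕜 E ^ 2 := by
  let coord := (stdOrthonormalBasis 𝕜 E).repr
  have kernel_eq (a : ι) (b : ι') : ‖⟪x a, y b⟫_𝕜‖ ^ 2 =
      qnnFeature (coord (x a)).ofLp ⬝ᵥ qnnFeature (coord (y b)).ofLp := by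
    rw [qnnFeature_dotProduct_qnnFeature, LinearIsometryEquiv.inner_map_map]
  simp_rw [kernel_eq]
  exact (rank_of_dotProduct_le _ _).trans_eq (by simp [sq])

theorem normSq_sum_mul_star_eq_norm_inner_sq {n : Type*} [Fintype n] (x y : n → ℂ) :
    Complex.normSq (∑ i, x i * star (y i)) = ‖⟪WithLp.toLp 2 x, WithLp.toLp 2 y⟫_ℂ‖ ^ 2 := by
  rw [Complex.normSq_eq_norm_sq, norm_inner_symm, EuclideanSpace.inner_toLp_toLp]
  rfl

/-- For any vectors `x⁽¹⁾, …, x⁽ᵐ⁾ ∈ ℂ^N`, the `m×m` real Gram matrix of the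
QNN kernel `K(x,y) = |⟨x,y⟩|²`, with entries `G_{ab} = |∑_i x⁽ᵃ⁾_i conj(x⁽ᵇ⁾_i)|²`,
has rank at most `N²`. -/
theorem stmt16 (N m : ℕ) (hN : 1 ≤ N) (x : Fin m → Fin N → ℂ) :
    (Matrix.of fun a b : Fin m =>
        (Complex.normSq (∑ i, x a i * star (x b i)) : ℝ)).rank ≤ N ^ 2 := by
  simpa only [normSq_sum_mul_star_eq_norm_inner_sq, finrank_euclideanSpace_fin] using
    stmt16_general (𝕜 := ℂ) (fun a => WithLp.toLp 2 (x a)) (fun b => WithLp.toLp 2 (x b))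
end
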